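/- arXiv:1704.04191 — 2 statements merged into one kernel-verified Lean document; each statement's English description precedes it below -/
import Mathlib

section
/- Let S : ℝᵐ ⇉ ℝⁿ be a set-valued map and (ȳ, x̄) ∈ gph S a point at which gph S is locally closed. Then clm(S; ȳ|x̄) = |DS(ȳ|x̄)|⁺; in particular, S has the isolated calmness property at ȳ for x̄ if and only if |DS(ȳ|x̄)|⁺ < ∞. -/
open Filter Topology Set Metric RealInnerProductSpace
open scoped ENNReal NNReal Pointwise

noncomputable section

/-- Graph of a set-valued map. -/
def svGraph {α β : Type*} (F : α → Set β) : Set (α × β) := {p | p.2 ∈ F p.1}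

/-- Inverse of a set-valued map. -/
def svInv {α β : Type*} (F : α → Set β) : β → Set α := fun y => {x | y ∈ F x}

/-- Local closedness of a set at a point of a metric space. -/
def LocClosedAt {α : Type*} [PseudoMetricSpace α] (s : Set α) (p : α) : Prop :=
  ∃ r : ℝ, 0 < r ∧ IsClosed (s ∩ Metric.closedBall p r)

section Cones

variable {X : Type*} [NormedAddCommGroup X] [NormedSpace ℝ X]

/-- Bouligand-Severi contingent cone. -/
def contingentCone (Ω : Set X) (x : X) : Set X :=
  { u | ∃ (t : ℕ → ℝ) (uk : ℕ → X), (∀ k, 0 < t k) ∧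
      Tendsto t atTop (𝓝 0) ∧ Tendsto uk atTop (𝓝 u) ∧ ∀ k, x + t k • uk k ∈ Ω }

/-- Bouligand paratingent cone. -/
def paratingentCone (Ω : Set X) (x : X) : Set X :=
  { u | ∃ (t : ℕ → ℝ) (uk : ℕ → X) (xk : ℕ → X), (∀ k, 0 < t k) ∧
      Tendsto t atTop (𝓝 0) ∧ Tendsto uk atTop (𝓝 u) ∧
      (∀ k, xk k ∈ Ω) ∧ Tendsto xk atTop (𝓝 x) ∧ ∀ k, xk k + t k • uk k ∈ Ω }

end Cones

section NormalCones

variable {X : Type*} [NormedAddCommGroup X] [InnerProductSpace ℝ X]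

/-- Fréchet (regular) normal cone. -/
def frechetNormalCone (Ω : Set X) (x : X) : Set X :=
  { v | ∀ ε : ℝ, 0 < ε → ∃ δ : ℝ, 0 < δ ∧ ∀ y ∈ Ω, ‖y - x‖ < δ →
      ⟪v, y - x⟫ ≤ ε * ‖y - x‖ }

/-- Limiting (Mordukhovich) normal cone. -/
def limitingNormalCone (Ω : Set X) (x : X) : Set X :=
  { v | ∃ (xk : ℕ → X) (vk : ℕ → X), (∀ k, xk k ∈ Ω) ∧
      Tendsto xk atTop (𝓝 x) ∧ Tendsto vk atTop (𝓝 v) ∧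
      ∀ k, vk k ∈ frechetNormalCone Ω (xk k) }

end NormalCones

section Derivatives

variable {E F : Type*} [NormedAddCommGroup E] [NormedSpace ℝ E]
  [NormedAddCommGroup F] [NormedSpace ℝ F]

/-- Graphical derivative. -/
def gDeriv (Fm : E → Set F) (x : E) (y : F) : E → Set F := fun u =>
  {v | (u, v) ∈ contingentCone (svGraph Fm) (x, y)}

/-- Strict graphical derivative. -/
def sgDeriv (Fm : E → Set F) (x : E) (y : F) : E → Set F := fun u =>
  {v | (u, v) ∈ paratingentCone (svGraph Fm) (x, y)}

end Derivatives

section Coderivative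

variable {E F : Type*} [NormedAddCommGroup E] [InnerProductSpace ℝ E]
  [NormedAddCommGroup F] [InnerProductSpace ℝ F]

/-- Coderivative: `w ∈ D*F(x|y)(z)` iff `(w, -z)` is in the limiting normal cone
to the graph of `F` (viewed inside the `ℓ²` product) at `(x, y)`. -/
def coDeriv (Fm : E → Set F) (x : E) (y : F) : F → Set E := fun z =>
  { w | (WithLp.equiv 2 (E × F)).symm (w, -z) ∈
      limitingNormalCone ((WithLp.equiv 2 (E × F)).symm '' svGraph Fm)
        ((WithLp.equiv 2 (E × F)).symm (x, y)) }

end Coderivative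

section Norms

variable {E F : Type*} [NormedAddCommGroup E] [NormedAddCommGroup F]

/-- Outer norm of a (positively homogeneous) set-valued map. -/
def outerNormSV (H : E → Set F) : ℝ≥0∞ :=
  ⨆ (x : E) (_ : ‖x‖ ≤ 1) (y : F) (_ : y ∈ H x), (‖y‖₊ : ℝ≥0∞)

/-- Inner norm of a (positively homogeneous) set-valued map. -/
def innerNormSV (H : E → Set F) : ℝ≥0∞ :=
  ⨆ (x : E) (_ : ‖x‖ ≤ 1), ⨅ (y : F) (_ : y ∈ H x), (‖y‖₊ : ℝ≥0∞)

/-- Positive homogeneity of a set-valued map. -/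
def PosHomogeneous {E F : Type*} [NormedAddCommGroup E] [NormedSpace ℝ E]
    [NormedAddCommGroup F] [NormedSpace ℝ F] (H : E → Set F) : Prop :=
  (0 : F) ∈ H 0 ∧ ∀ (c : ℝ), 0 < c → ∀ x, H (c • x) = c • (H x)

end Norms

section Stability

variable {E F : Type*} [NormedAddCommGroup E] [NormedAddCommGroup F]

/-- Metric regularity with constant `κ`. -/
def MetrRegWith (κ : ℝ≥0) (Fm : E → Set F) (xbar : E) (ybar : F) : Prop :=
  ∃ U ∈ 𝓝 xbar, ∃ V ∈ 𝓝 ybar, ∀ x ∈ U, ∀ y ∈ V,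
    EMetric.infEdist x (svInv Fm y) ≤ (κ : ℝ≥0∞) * EMetric.infEdist y (Fm x)

/-- The regularity modulus `reg (F; xbar|ybar)`. -/
def regMod (Fm : E → Set F) (xbar : E) (ybar : F) : ℝ≥0∞ :=
  ⨅ (κ : ℝ≥0) (_ : MetrRegWith κ Fm xbar ybar), (κ : ℝ≥0∞)

/-- Aubin property with constant `κ`. -/
def AubinWith (κ : ℝ≥0) (S : F → Set E) (ybar : F) (xbar : E) : Prop :=
  ∃ V ∈ 𝓝 ybar, ∃ U ∈ 𝓝 xbar, ∀ y ∈ V, ∀ y' ∈ V, ∀ x ∈ S y' ∩ U,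
    ∃ x' ∈ S y, ‖x - x'‖ ≤ (κ : ℝ) * ‖y - y'‖

/-- The Lipschitz modulus `lip (S; ybar|xbar)`. -/
def lipMod (S : F → Set E) (ybar : F) (xbar : E) : ℝ≥0∞ :=
  ⨅ (κ : ℝ≥0) (_ : AubinWith κ S ybar xbar), (κ : ℝ≥0∞)

/-- Strong metric subregularity with constant `κ`. -/
def SubregWith (κ : ℝ≥0) (Fm : E → Set F) (xbar : E) (ybar : F) : Prop :=
  ∃ U ∈ 𝓝 xbar, ∀ x ∈ U, (‖x - xbar‖₊ : ℝ≥0∞) ≤ (κ : ℝ≥0∞) * EMetric.infEdist ybar (Fm x)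

/-- The subregularity modulus `subreg (F; xbar|ybar)`. -/
def subregMod (Fm : E → Set F) (xbar : E) (ybar : F) : ℝ≥0∞ :=
  ⨅ (κ : ℝ≥0) (_ : SubregWith κ Fm xbar ybar), (κ : ℝ≥0∞)

/-- Isolated calmness with constant `κ`. -/
def CalmWith (κ : ℝ≥0) (S : F → Set E) (ybar : F) (xbar : E) : Prop :=
  ∃ V ∈ 𝓝 ybar, ∃ U ∈ 𝓝 xbar, ∀ y ∈ V, ∀ x ∈ S y ∩ U, ‖x - xbar‖ ≤ (κ : ℝ) * ‖y - ybar‖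

/-- The calmness modulus `clm (S; ybar|xbar)`. -/
def clmMod (S : F → Set E) (ybar : F) (xbar : E) : ℝ≥0∞ :=
  ⨅ (κ : ℝ≥0) (_ : CalmWith κ S ybar xbar), (κ : ℝ≥0∞)

/-- Strong metric regularity: metric regularity plus a single-valued localization
of the inverse. -/
def StrongMetrReg (Fm : E → Set F) (xbar : E) (ybar : F) : Prop :=
  (∃ κ : ℝ≥0, MetrRegWith κ Fm xbar ybar) ∧
  ∃ U ∈ 𝓝 xbar, ∃ V ∈ 𝓝 ybar, ∀ y ∈ V, (svInv Fm y ∩ U).Subsingleton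

end Stability

theorem clmMod_lt_top_iff {E F : Type*} [NormedAddCommGroup E] [NormedAddCommGroup F]
    {S : F → Set E} {ybar : F} {xbar : E} :
    clmMod S ybar xbar < ⊤ ↔ ∃ κ : ℝ≥0, CalmWith κ S ybar xbar := by
  simp [clmMod, iInf_lt_iff]

section IsolatedCalmness

variable {E F : Type*} [NormedAddCommGroup E] [NormedSpace ℝ E]
  [NormedAddCommGroup F] [NormedSpace ℝ F]

/-- A constant of isolated calmness bounds the graphical derivative. -/
theorem CalmWith.norm_le_of_mem_gDeriv {κ : ℝ≥0} {S : F → Set E} {ybar : F} {xbar : E}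
    (h : CalmWith κ S ybar xbar) {u : F} {v : E} (hv : v ∈ gDeriv S ybar xbar u) :
    ‖v‖ ≤ κ * ‖u‖ := by
  obtain ⟨V, hV, U, hU, hVU⟩ := h
  obtain ⟨t, w, ht, ht0, hw, hmem⟩ := hv
  have hlim : Tendsto (fun k => (ybar, xbar) + t k • w k) atTop (𝓝 (ybar, xbar)) := by
    simpa using (tendsto_const_nhds (x := (ybar, xbar))).add (ht0.smul hw)
  have hev : ∀ᶠ k in atTop, ‖(w k).2‖ ≤ κ * ‖(w k).1‖ := by
    filter_upwards [hlim (prod_mem_nhds hV hU)] with k hk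
    have hle := hVU _ hk.1 _ ⟨hmem k, hk.2⟩
    simp only [Prod.fst_add, Prod.snd_add, Prod.smul_fst, Prod.smul_snd, add_sub_cancel_left,
      norm_smul, Real.norm_of_nonneg (ht k).le] at hle
    exact le_of_mul_le_mul_left (by linarith) (ht k)
  have hw1 : Tendsto (fun k => (w k).1) atTop (𝓝 u) := (continuous_fst.tendsto _).comp hw
  have hw2 : Tendsto (fun k => (w k).2) atTop (𝓝 v) := (continuous_snd.tendsto _).comp hw
  exact le_of_tendsto_of_tendsto hw2.norm (hw1.norm.const_mul _) hev

theorem outerNormSV_gDeriv_le_clmMod (S : F → Set E) (ybar : F) (xbar : E) :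
    outerNormSV (gDeriv S ybar xbar) ≤ clmMod S ybar xbar := by
  refine le_iInf₂ fun κ hκ => iSup₂_le fun u hu => iSup₂_le fun v hv => ?_
  have hle : ‖v‖ ≤ κ :=
    (hκ.norm_le_of_mem_gDeriv hv).trans (mul_le_of_le_one_right κ.coe_nonneg hu)
  exact_mod_cast hle

/-- In finite dimensions every constant above the outer norm of the graphical derivative is a
constant of isolated calmness. -/
theorem calmWith_of_outerNormSV_gDeriv_lt [ProperSpace E] [ProperSpace F] {κ : ℝ≥0}
    {S : F → Set E} {ybar : F} {xbar : E} (h : outerNormSV (gDeriv S ybar xbar) < κ) :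
    CalmWith κ S ybar xbar := by
  have hκ : (0 : ℝ) < κ := by
    have : (0 : ℝ≥0∞) < κ := bot_le.trans_lt h
    exact_mod_cast this
  by_contra hcalm
  have hbad : ∀ k : ℕ, ∃ p : F × E, p ∈ svGraph S ∧ ‖p.2 - xbar‖ < 1 / ((k : ℝ) + 1) ∧
      κ * ‖p.1 - ybar‖ < ‖p.2 - xbar‖ := by
    intro k
    by_contra! hk
    have hpos : (0 : ℝ) < 1 / ((k : ℝ) + 1) := Nat.one_div_pos_of_nat
    refine hcalm ⟨univ, univ_mem, ball xbar _, ball_mem_nhds _ hpos, fun y _ x hx => ?_⟩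
    exact hk (y, x) hx.1 (by simpa [dist_eq_norm] using hx.2)
  choose p hpS hp0 hpκ using hbad
  have hpos : ∀ k, 0 < ‖(p k).2 - xbar‖ := fun k => (by positivity : (0 : ℝ) ≤ _).trans_lt (hpκ k)
  set t : ℕ → ℝ := fun k => ‖(p k).2 - xbar‖ / κ with ht_def
  have ht : ∀ k, 0 < t k := fun k => div_pos (hpos k) hκ
  have ht0 : Tendsto t atTop (𝓝 0) := by
    have hnorm : Tendsto (fun k => ‖(p k).2 - xbar‖) atTop (𝓝 0) :=
      squeeze_zero (fun _ => norm_nonneg _) (fun k => (hp0 k).le)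
        tendsto_one_div_add_atTop_nhds_zero_nat
    simpa using hnorm.div_const (κ : ℝ)
  set w : ℕ → F × E := fun k => (t k)⁻¹ • (p k - (ybar, xbar)) with hw_def
  have hw : ∀ k, w k ∈ closedBall (0 : F) 1 ×ˢ sphere (0 : E) κ := by
    intro k
    refine ⟨?_, ?_⟩
    · rw [mem_closedBall_zero_iff]
      simp only [hw_def, Prod.smul_fst, Prod.fst_sub, norm_smul, norm_inv,
        Real.norm_of_nonneg (ht k).le]
      rw [inv_mul_le_one₀ (ht k), ht_def, le_div_iff₀ hκ]
      linarith [hpκ k]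
    · rw [mem_sphere_zero_iff_norm]
      simp only [hw_def, Prod.smul_snd, Prod.snd_sub, norm_smul, norm_inv,
        Real.norm_of_nonneg (ht k).le]
      have := (hpos k).ne'
      simp only [ht_def]
      field_simp
  obtain ⟨⟨u, v⟩, ⟨hu, hv⟩, φ, hφ, hlim⟩ :=
    ((isCompact_closedBall (0 : F) 1).prod (isCompact_sphere (0 : E) κ)).tendsto_subseq hw
  rw [mem_closedBall_zero_iff] at hu
  rw [mem_sphere_zero_iff_norm] at hv
  have hmem : v ∈ gDeriv S ybar xbar u := by
    refine ⟨t ∘ φ, w ∘ φ, fun k => ht _, ht0.comp hφ.tendsto_atTop, hlim, fun k => ?_⟩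
    simpa [hw_def, smul_inv_smul₀ (ht (φ k)).ne'] using hpS (φ k)
  have hle : (‖v‖₊ : ℝ≥0∞) ≤ outerNormSV (gDeriv S ybar xbar) :=
    le_iSup₂_of_le u hu (le_iSup₂_of_le v hmem le_rfl)
  have hvκ : ‖v‖₊ = κ := NNReal.eq hv
  exact (hvκ ▸ hle).not_gt h

theorem clmMod_eq_outerNormSV_gDeriv [ProperSpace E] [ProperSpace F]
    (S : F → Set E) (ybar : F) (xbar : E) :
    clmMod S ybar xbar = outerNormSV (gDeriv S ybar xbar) := by
  refine le_antisymm (le_of_forall_gt fun a ha => ?_) (outerNormSV_gDeriv_le_clmMod S ybar xbar)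
  obtain ⟨κ, hκ, hκa⟩ := ENNReal.lt_iff_exists_nnreal_btwn.1 ha
  have hcalm : CalmWith κ S ybar xbar := calmWith_of_outerNormSV_gDeriv_lt hκ
  have hle : clmMod S ybar xbar ≤ κ := iInf₂_le κ hcalm
  exact hle.trans_lt hκa

end IsolatedCalmness

/-- Graphical derivative criterion for isolated calmness:
`clm (S; ybar|xbar) = |DS(ybar|xbar)|⁺`. -/
theorem gDeriv_criterion_for_isolated_calmness {n m : ℕ}
    (S : EuclideanSpace ℝ (Fin m) → Set (EuclideanSpace ℝ (Fin n)))
    (ybar : EuclideanSpace ℝ (Fin m)) (xbar : EuclideanSpace ℝ (Fin n))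
    (hgr : xbar ∈ S ybar) (hloc : LocClosedAt (svGraph S) (ybar, xbar)) :
    clmMod S ybar xbar = outerNormSV (gDeriv S ybar xbar) ∧
    ((∃ κ : ℝ≥0, CalmWith κ S ybar xbar) ↔ outerNormSV (gDeriv S ybar xbar) < ⊤) := by
  have heq := clmMod_eq_outerNormSV_gDeriv S ybar xbar
  exact ⟨heq, heq ▸ clmMod_lt_top_iff.symm⟩

end
end

section
/- Let F : ℝⁿ ⇉ ℝᵐ be a set-valued map whose graph is closed around (x̄, ȳ) ∈ gph F (locally closed at (x̄,ȳ)). Then the following are equivalent: (a) F has the Aubin property at x̄ for ȳ; (b) |D*F(x̄|ȳ)|⁺ < ∞; (c) D*F(x̄|ȳ)(0) = {0}. Moreover, in this case lip(F; x̄|ȳ) = |D*F(x̄|ȳ)|⁺. -/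
open Filter Topology Set Metric RealInnerProductSpace
open scoped ENNReal NNReal Pointwise

noncomputable section

section Norms

variable {E F : Type*} [NormedAddCommGroup E] [NormedAddCommGroup F]

lemma norm_withLp_le_add (p : WithLp 2 (E × F)) : ‖p‖ ≤ ‖p.fst‖ + ‖p.snd‖ := by
  rw [WithLp.prod_norm_eq_of_L2]
  exact Real.sqrt_le_iff.2 ⟨by positivity, by nlinarith [norm_nonneg p.fst, norm_nonneg p.snd]⟩

lemma norm_fst_le_norm_withLp (p : WithLp 2 (E × F)) : ‖p.fst‖ ≤ ‖p‖ := by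
  rw [WithLp.prod_norm_eq_of_L2]
  exact Real.le_sqrt_of_sq_le (by nlinarith [sq_nonneg ‖p.snd‖])

lemma norm_snd_le_norm_withLp (p : WithLp 2 (E × F)) : ‖p.snd‖ ≤ ‖p‖ := by
  rw [WithLp.prod_norm_eq_of_L2]
  exact Real.le_sqrt_of_sq_le (by nlinarith [sq_nonneg ‖p.fst‖])

lemma nnnorm_le_outerNormSV {H : F → Set E} {z : F} {w : E} (hz : ‖z‖ ≤ 1) (hw : w ∈ H z) :
    (‖w‖₊ : ℝ≥0∞) ≤ outerNormSV H :=
  le_iSup₂_of_le z hz (le_iSup₂_of_le w hw le_rfl)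

end Norms

section Conormals

variable {E F : Type*} [NormedAddCommGroup E] [InnerProductSpace ℝ E]
  [NormedAddCommGroup F] [InnerProductSpace ℝ F]

/-- `(w, -z)` is a Fréchet normal to the graph of `Fm` at `(x, y)`, expressed in coordinates. -/
def IsFrechetConormal (Fm : E → Set F) (x : E) (y : F) (w : E) (z : F) : Prop :=
  ∀ ε : ℝ, 0 < ε → ∃ δ : ℝ, 0 < δ ∧ ∀ x' y', y' ∈ Fm x' → ‖x' - x‖ < δ → ‖y' - y‖ < δ →
    ⟪w, x' - x⟫ - ⟪z, y' - y⟫ ≤ ε * (‖x' - x‖ + ‖y' - y‖)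

lemma mem_frechetNormalCone_graph_iff (Fm : E → Set F) (p v : WithLp 2 (E × F)) :
    v ∈ frechetNormalCone ((WithLp.equiv 2 (E × F)).symm '' svGraph Fm) p ↔
      IsFrechetConormal Fm p.fst p.snd v.fst (-v.snd) := by
  constructor
  · intro h ε hε
    obtain ⟨δ, hδ, H⟩ := h ε hε
    refine ⟨δ / 2, by positivity, fun x' y' hy' hx hy => ?_⟩
    have hn := norm_withLp_le_add (WithLp.toLp 2 (x', y') - p)
    have hi := H (WithLp.toLp 2 (x', y')) ⟨(x', y'), hy', rfl⟩
    change ‖WithLp.toLp 2 (x', y') - p‖ ≤ ‖x' - p.fst‖ + ‖y' - p.snd‖ at hn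
    rw [WithLp.prod_inner_apply] at hi
    simp only [inner_neg_left, sub_neg_eq_add]
    exact (hi (by linarith)).trans (by gcongr)
  · intro h ε hε
    obtain ⟨δ, hδ, H⟩ := h (ε / 2) (by positivity)
    refine ⟨δ, hδ, ?_⟩
    rintro _ ⟨⟨x', y'⟩, hy', rfl⟩ hq
    have h1 := norm_fst_le_norm_withLp (WithLp.toLp 2 (x', y') - p)
    have h2 := norm_snd_le_norm_withLp (WithLp.toLp 2 (x', y') - p)
    change ‖WithLp.toLp 2 (x', y') - p‖ < δ at hq
    change ⟪v, WithLp.toLp 2 (x', y') - p⟫ ≤ ε * ‖WithLp.toLp 2 (x', y') - p‖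
    have hi := H x' y' hy' (h1.trans_lt hq) (h2.trans_lt hq)
    simp only [inner_neg_left, sub_neg_eq_add] at hi
    change ‖x' - p.fst‖ ≤ _ at h1
    change ‖y' - p.snd‖ ≤ _ at h2
    rw [WithLp.prod_inner_apply]
    refine hi.trans ?_
    nlinarith

lemma mem_coDeriv_iff (Fm : E → Set F) (x : E) (y : F) (w : E) (z : F) :
    w ∈ coDeriv Fm x y z ↔ ∃ (xk : ℕ → E) (yk : ℕ → F) (wk : ℕ → E) (zk : ℕ → F),
      (∀ k, yk k ∈ Fm (xk k)) ∧ Tendsto xk atTop (𝓝 x) ∧ Tendsto yk atTop (𝓝 y) ∧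
      Tendsto wk atTop (𝓝 w) ∧ Tendsto zk atTop (𝓝 z) ∧
      ∀ k, IsFrechetConormal Fm (xk k) (yk k) (wk k) (zk k) := by
  have hfst : Continuous (fun p : WithLp 2 (E × F) => p.fst) :=
    continuous_fst.comp (WithLp.prod_continuous_ofLp 2 E F)
  have hsnd : Continuous (fun p : WithLp 2 (E × F) => p.snd) :=
    continuous_snd.comp (WithLp.prod_continuous_ofLp 2 E F)
  constructor
  · rintro ⟨pk, vk, hp, hpt, hvt, hv⟩
    refine ⟨fun k => (pk k).fst, fun k => (pk k).snd, fun k => (vk k).fst, fun k => -(vk k).snd,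
      fun k => ?_, (hfst.tendsto _).comp hpt, (hsnd.tendsto _).comp hpt,
      (hfst.tendsto _).comp hvt, ?_,
      fun k => (mem_frechetNormalCone_graph_iff Fm _ _).1 (hv k)⟩
    · obtain ⟨q, hq, hqp⟩ := hp k
      change (pk k).snd ∈ Fm (pk k).fst
      rw [← hqp]
      exact hq
    · simpa using ((hsnd.tendsto _).comp hvt).neg
  · rintro ⟨xk, yk, wk, zk, hg, hx, hy, hw, hz, hN⟩
    have hto := WithLp.prod_continuous_toLp 2 E F
    refine ⟨fun k => WithLp.toLp 2 (xk k, yk k), fun k => WithLp.toLp 2 (wk k, -zk k),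
      fun k => ⟨(xk k, yk k), hg k, rfl⟩, (hto.tendsto _).comp (hx.prodMk_nhds hy),
      (hto.tendsto _).comp (hw.prodMk_nhds hz.neg), fun k => ?_⟩
    rw [mem_frechetNormalCone_graph_iff]
    simpa using hN k

lemma IsFrechetConormal.smul {Fm : E → Set F} {x : E} {y : F} {w : E} {z : F}
    (h : IsFrechetConormal Fm x y w z) {c : ℝ} (hc : 0 < c) :
    IsFrechetConormal Fm x y (c • w) (c • z) := by
  intro ε hε
  obtain ⟨δ, hδ, H⟩ := h (ε / c) (by positivity)
  refine ⟨δ, hδ, fun x' y' hy' h1 h2 => ?_⟩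
  have := mul_le_mul_of_nonneg_left (H x' y' hy' h1 h2) hc.le
  rw [real_inner_smul_left, real_inner_smul_left]
  calc _ = c * (⟪w, x' - x⟫ - ⟪z, y' - y⟫) := by ring
    _ ≤ _ := this
    _ = _ := by field_simp

lemma smul_mem_coDeriv {Fm : E → Set F} {x : E} {y : F} {w : E} {z : F}
    (h : w ∈ coDeriv Fm x y z) {c : ℝ} (hc : 0 < c) : c • w ∈ coDeriv Fm x y (c • z) := by
  obtain ⟨xk, yk, wk, zk, hg, hx, hy, hw, hz, hN⟩ := (mem_coDeriv_iff ..).1 h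
  exact (mem_coDeriv_iff ..).2 ⟨xk, yk, fun k => c • wk k, fun k => c • zk k, hg, hx, hy,
    hw.const_smul c, hz.const_smul c, fun k => (hN k).smul hc⟩

lemma zero_mem_coDeriv_zero {Fm : E → Set F} {x : E} {y : F} (h : y ∈ Fm x) :
    0 ∈ coDeriv Fm x y 0 := by
  refine (mem_coDeriv_iff ..).2 ⟨fun _ => x, fun _ => y, fun _ => 0, fun _ => 0, fun _ => h,
    tendsto_const_nhds, tendsto_const_nhds, tendsto_const_nhds, tendsto_const_nhds,
    fun _ ε hε => ⟨1, one_pos, fun x' y' _ _ _ => ?_⟩⟩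
  simp only [inner_zero_left, sub_zero]
  positivity

/-- Under the Aubin property with constant `κ`, Fréchet conormals `(w, z)` at nearby graph points
satisfy `‖w‖ ≤ κ ‖z‖`. -/
lemma IsFrechetConormal.norm_le_of_local_aubin {Fm : E → Set F} {x : E} {y : F} {w : E} {z : F}
    (h : IsFrechetConormal Fm x y w z) {κ : ℝ} (hκ : 0 ≤ κ)
    (hA : ∀ᶠ x' in 𝓝 x, ∃ y' ∈ Fm x', ‖y - y'‖ ≤ κ * ‖x' - x‖) : ‖w‖ ≤ κ * ‖z‖ := by
  rcases eq_or_ne w 0 with rfl | hw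
  · simp only [norm_zero]; positivity
  have hw0 : 0 < ‖w‖ := norm_pos_iff.2 hw
  refine le_of_forall_pos_le_add fun ε hε => ?_
  obtain ⟨δ, hδ, H⟩ := h (ε / (1 + κ)) (by positivity)
  have hcont : Tendsto (fun t : ℝ => x + t • w) (𝓝[>] 0) (𝓝 x) := by
    have : Continuous fun t : ℝ => x + t • w := by fun_prop
    simpa using (this.tendsto 0).mono_left nhdsWithin_le_nhds
  have hsmall : ∀ᶠ t : ℝ in 𝓝[>] 0, t < δ / ((1 + κ) * ‖w‖) :=
    nhdsWithin_le_nhds (eventually_lt_nhds (by positivity))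
  obtain ⟨t, ⟨⟨y', hy', hyy⟩, htδ⟩, ht⟩ :=
    ((hcont.eventually hA).and hsmall).and self_mem_nhdsWithin |>.exists
  replace ht : 0 < t := ht
  rw [lt_div_iff₀ (by positivity)] at htδ
  have hx : ‖x + t • w - x‖ = t * ‖w‖ := by
    rw [add_sub_cancel_left, norm_smul, Real.norm_of_nonneg ht.le]
  rw [hx, norm_sub_rev] at hyy
  have htw : 0 < t * ‖w‖ := by positivity
  have hi := H (x + t • w) y' hy' (by rw [hx]; nlinarith [mul_nonneg hκ htw.le])
    (by nlinarith)
  rw [hx, add_sub_cancel_left, real_inner_smul_right, real_inner_self_eq_norm_sq] at hi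
  have hz : ⟪z, y' - y⟫ ≤ ‖z‖ * (κ * (t * ‖w‖)) :=
    (real_inner_le_norm _ _).trans (by gcongr)
  have hε' : ε / (1 + κ) * (t * ‖w‖ + ‖y' - y‖) ≤ ε * (t * ‖w‖) := by
    calc _ ≤ ε / (1 + κ) * (t * ‖w‖ + κ * (t * ‖w‖)) := by gcongr
      _ = _ := by field_simp
  refine le_of_mul_le_mul_right ?_ htw
  nlinarith

lemma norm_le_of_aubinWith {Fm : E → Set F} {x : E} {y : F} {κ : ℝ≥0}
    (hA : AubinWith κ Fm x y) {w : E} {z : F} (hw : w ∈ coDeriv Fm x y z) : ‖w‖ ≤ κ * ‖z‖ := by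
  obtain ⟨V, hV, U, hU, hA⟩ := hA
  obtain ⟨xk, yk, wk, zk, hg, hx, hy, hw, hz, hN⟩ := (mem_coDeriv_iff ..).1 hw
  refine le_of_tendsto_of_tendsto hw.norm (hz.norm.const_mul _) ?_
  filter_upwards [hx.eventually (eventually_mem_nhds_iff.2 hV), hy.eventually hU] with k hk hk'
  refine (hN k).norm_le_of_local_aubin κ.2 ?_
  filter_upwards [hk] with x' hx'
  exact hA x' hx' (xk k) (mem_of_mem_nhds hk) (yk k) ⟨hg k, hk'⟩

lemma outerNormSV_le_of_aubinWith {Fm : E → Set F} {x : E} {y : F} {κ : ℝ≥0}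
    (hA : AubinWith κ Fm x y) : outerNormSV (coDeriv Fm x y) ≤ κ := by
  refine iSup₂_le fun z hz => iSup₂_le fun w hw => ?_
  have := norm_le_of_aubinWith hA hw
  have h : ‖w‖ ≤ κ := this.trans (mul_le_of_le_one_right κ.2 hz)
  exact_mod_cast h

/-- Normalized Fréchet conormals at points converging to `(x, y)` accumulate at an element of the
coderivative. -/
lemma exists_mem_coDeriv_norm_eq_one [FiniteDimensional ℝ E] [FiniteDimensional ℝ F]
    {Fm : E → Set F} {x : E} {y : F} {xk : ℕ → E} {yk : ℕ → F} {wk : ℕ → E} {zk : ℕ → F}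
    {bk : ℕ → ℝ} {b : ℝ} (hg : ∀ k, yk k ∈ Fm (xk k)) (hx : Tendsto xk atTop (𝓝 x))
    (hy : Tendsto yk atTop (𝓝 y)) (hN : ∀ k, IsFrechetConormal Fm (xk k) (yk k) (wk k) (zk k))
    (hw : ∀ k, wk k ≠ 0) (hz : ∀ k, ‖zk k‖ ≤ bk k * ‖wk k‖) (hb : Tendsto bk atTop (𝓝 b)) :
    ∃ z w, w ∈ coDeriv Fm x y z ∧ ‖w‖ = 1 ∧ ‖z‖ ≤ b := by
  have hw0 : ∀ k, 0 < ‖wk k‖ := fun k => norm_pos_iff.2 (hw k)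
  have hw1 : ∀ k, ‖‖wk k‖⁻¹ • wk k‖ = 1 := fun k => by
    rw [norm_smul, norm_inv, norm_norm, inv_mul_cancel₀ (hw0 k).ne']
  have hz1 : ∀ k, ‖‖wk k‖⁻¹ • zk k‖ ≤ bk k := fun k => by
    rw [norm_smul, norm_inv, norm_norm, inv_mul_le_iff₀ (hw0 k), mul_comm]
    exact hz k
  obtain ⟨B, hB⟩ := hb.bddAbove_range
  have hzB : ∀ k, ‖‖wk k‖⁻¹ • zk k‖ ≤ B := fun k => (hz1 k).trans (hB ⟨k, rfl⟩)
  have := FiniteDimensional.proper_real E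
  have := FiniteDimensional.proper_real F
  obtain ⟨⟨w, z⟩, -, φ, hφ, hlim⟩ :=
    ((isCompact_closedBall (0 : E) 1).prod (isCompact_closedBall (0 : F) B)).tendsto_subseq
      (x := fun k => (‖wk k‖⁻¹ • wk k, ‖wk k‖⁻¹ • zk k))
      (fun k => ⟨by simpa using (hw1 k).le, by simpa using hzB k⟩)
  have hwlim : Tendsto (fun k => ‖wk (φ k)‖⁻¹ • wk (φ k)) atTop (𝓝 w) := hlim.fst_nhds
  have hzlim : Tendsto (fun k => ‖wk (φ k)‖⁻¹ • zk (φ k)) atTop (𝓝 z) := hlim.snd_nhds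
  have hφt := hφ.tendsto_atTop
  refine ⟨z, w, (mem_coDeriv_iff ..).2 ⟨xk ∘ φ, yk ∘ φ, _, _, fun k => hg (φ k), hx.comp hφt,
    hy.comp hφt, hwlim, hzlim, fun k => (hN (φ k)).smul (inv_pos.2 (hw0 _))⟩, ?_,
    le_of_tendsto_of_tendsto hzlim.norm (hb.comp hφt) (.of_forall fun k => hz1 (φ k))⟩
  exact tendsto_nhds_unique hwlim.norm (by simp only [hw1]; exact tendsto_const_nhds)

lemma coDeriv_zero_eq_of_outerNormSV_lt_top {Fm : E → Set F} {x : E} {y : F} (hg : y ∈ Fm x)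
    (h : outerNormSV (coDeriv Fm x y) < ⊤) : coDeriv Fm x y 0 = {0} := by
  refine Set.eq_singleton_iff_unique_mem.2 ⟨zero_mem_coDeriv_zero hg, fun w hw => ?_⟩
  by_contra hne
  have hw0 : 0 < ‖w‖ := norm_pos_iff.2 hne
  set M := (outerNormSV (coDeriv Fm x y)).toReal
  have hM : 0 ≤ M := ENNReal.toReal_nonneg
  have hc : 0 < (M + 1) / ‖w‖ := by positivity
  have hmem := smul_mem_coDeriv hw hc
  rw [smul_zero] at hmem
  have hle := ENNReal.toReal_mono h.ne (nnnorm_le_outerNormSV (by simp) hmem)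
  rw [ENNReal.coe_toReal, coe_nnnorm, norm_smul, Real.norm_of_nonneg hc.le,
    div_mul_cancel₀ _ hw0.ne'] at hle
  linarith

lemma outerNormSV_lt_top_of_coDeriv_zero_eq [FiniteDimensional ℝ E] [FiniteDimensional ℝ F]
    {Fm : E → Set F} {x : E} {y : F} (h : coDeriv Fm x y 0 = {0}) :
    outerNormSV (coDeriv Fm x y) < ⊤ := by
  by_contra htop
  have key : ∀ k : ℕ, ∃ (x' : E) (y' : F) (w : E) (z : F), y' ∈ Fm x' ∧
      dist x' x < 1 / ((k : ℝ) + 1) ∧ dist y' y < 1 / ((k : ℝ) + 1) ∧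
      IsFrechetConormal Fm x' y' w z ∧ (k : ℝ) + 1 < ‖w‖ ∧ ‖z‖ < 2 := by
    intro k
    have hlt : ((k + 1 : ℝ≥0) : ℝ≥0∞) < outerNormSV (coDeriv Fm x y) := by
      rw [not_lt_top_iff.1 htop]; exact ENNReal.coe_lt_top
    simp only [outerNormSV, lt_iSup_iff] at hlt
    obtain ⟨z, hz, w, hw, hlt⟩ := hlt
    have hwk : (k : ℝ) + 1 < ‖w‖ := by exact_mod_cast hlt
    obtain ⟨xk, yk, wk, zk, hg, hx, hy, hw, hz', hN⟩ := (mem_coDeriv_iff ..).1 hw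
    have hk : (0 : ℝ) < 1 / ((k : ℝ) + 1) := by positivity
    obtain ⟨j, ⟨⟨h1, h2⟩, h3⟩, h4⟩ := (((Metric.tendsto_nhds.1 hx _ hk).and
      (Metric.tendsto_nhds.1 hy _ hk)).and (hw.norm.eventually_const_lt hwk)).and
      (hz'.norm.eventually_lt_const (hz.trans_lt one_lt_two)) |>.exists
    exact ⟨_, _, _, _, hg j, h1, h2, hN j, h3, h4⟩
  choose xk yk wk zk hg hx hy hN hw hz using key
  have hlim := tendsto_one_div_add_atTop_nhds_zero_nat (𝕜 := ℝ)
  have hx' : Tendsto xk atTop (𝓝 x) := tendsto_iff_dist_tendsto_zero.2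
    (squeeze_zero (fun _ => dist_nonneg) (fun k => (hx k).le) hlim)
  have hy' : Tendsto yk atTop (𝓝 y) := tendsto_iff_dist_tendsto_zero.2
    (squeeze_zero (fun _ => dist_nonneg) (fun k => (hy k).le) hlim)
  obtain ⟨z, w, hmem, hw1, hz0⟩ := exists_mem_coDeriv_norm_eq_one hg hx' hy' hN
    (fun k h0 => by have := hw k; rw [h0, norm_zero] at this; linarith [k.cast_nonneg (α := ℝ)])
    (bk := fun k => 2 * (1 / ((k : ℝ) + 1)))
    (fun k => by
      have hk : (0 : ℝ) < (k : ℝ) + 1 := by positivity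
      have h1 : 1 ≤ 1 / ((k : ℝ) + 1) * ‖wk k‖ := by
        rw [one_div_mul_eq_div, le_div_iff₀ hk]; linarith [hw k]
      linarith [hz k])
    (hlim.const_mul 2)
  rw [mul_zero, norm_le_zero_iff] at hz0
  rw [hz0, h, Set.mem_singleton_iff] at hmem
  simp [hmem] at hw1

/-- A bound on the coderivative is inherited by Fréchet conormals at nearby graph points. -/
lemma exists_ball_norm_le_of_outerNormSV_lt [FiniteDimensional ℝ E] [FiniteDimensional ℝ F]
    {Fm : E → Set F} {x : E} {y : F} {a : ℝ≥0} (ha : outerNormSV (coDeriv Fm x y) < a) :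
    ∃ ρ : ℝ, 0 < ρ ∧ ∀ x' y' w z, y' ∈ Fm x' → dist x' x < ρ → dist y' y < ρ →
      IsFrechetConormal Fm x' y' w z → ‖w‖ ≤ a * ‖z‖ := by
  have ha0 : (0 : ℝ) < a := by
    have : (0 : ℝ≥0∞) < a := zero_le.trans_lt ha
    exact_mod_cast this
  by_contra! hcon
  choose xk yk wk zk hg hx hy hN hw using
    fun k : ℕ => hcon (1 / ((k : ℝ) + 1)) (by positivity)
  have hlim := tendsto_one_div_add_atTop_nhds_zero_nat (𝕜 := ℝ)
  have hx' : Tendsto xk atTop (𝓝 x) := tendsto_iff_dist_tendsto_zero.2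
    (squeeze_zero (fun _ => dist_nonneg) (fun k => (hx k).le) hlim)
  have hy' : Tendsto yk atTop (𝓝 y) := tendsto_iff_dist_tendsto_zero.2
    (squeeze_zero (fun _ => dist_nonneg) (fun k => (hy k).le) hlim)
  obtain ⟨z, w, hmem, hw1, hz⟩ := exists_mem_coDeriv_norm_eq_one hg hx' hy' hN
    (fun k => norm_pos_iff.1 (lt_of_le_of_lt (by positivity) (hw k)))
    (bk := fun _ => (a : ℝ)⁻¹)
    (fun k => by rw [← div_eq_inv_mul, le_div_iff₀ ha0, mul_comm]; exact (hw k).le)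
    tendsto_const_nhds
  have hle := nnnorm_le_outerNormSV (z := (a : ℝ) • z) (by
    rw [norm_smul, Real.norm_of_nonneg ha0.le]
    calc (a : ℝ) * ‖z‖ ≤ a * (a : ℝ)⁻¹ := by gcongr
      _ = 1 := mul_inv_cancel₀ ha0.ne') (smul_mem_coDeriv hmem ha0)
  have hnorm : ‖(a : ℝ) • w‖₊ = a := by
    ext; simp [norm_smul, hw1]
  rw [hnorm] at hle
  exact absurd ha hle.not_gt

/-- Quadratic upper bound for the smoothed norm `v ↦ √(‖v‖² + η²)`. -/
lemma sqrt_norm_sq_add_sq_sub_le {u v : F} {η : ℝ} (hv : 0 < √(‖v‖ ^ 2 + η ^ 2)) :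
    √(‖u‖ ^ 2 + η ^ 2) - √(‖v‖ ^ 2 + η ^ 2) ≤
      (√(‖v‖ ^ 2 + η ^ 2))⁻¹ * (⟪v, u - v⟫ + ‖u - v‖ ^ 2 / 2) := by
  set s := √(‖v‖ ^ 2 + η ^ 2) with hs
  set t := √(‖u‖ ^ 2 + η ^ 2) with ht
  have hs2 : s ^ 2 = ‖v‖ ^ 2 + η ^ 2 := Real.sq_sqrt (by positivity)
  have ht2 : t ^ 2 = ‖u‖ ^ 2 + η ^ 2 := Real.sq_sqrt (by positivity)
  have hu : ‖u‖ ^ 2 = ‖v‖ ^ 2 + 2 * ⟪v, u - v⟫ + ‖u - v‖ ^ 2 := by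
    rw [← norm_add_sq_real, add_sub_cancel]
  rw [inv_mul_eq_div, le_div_iff₀ hv]
  nlinarith [sq_nonneg (t - s)]

/-- First-order optimality for a local minimizer over the graph of the smoothed penalty
`(u, v) ↦ ‖u - x‖ + c √(‖v - y‖² + η²)`. -/
lemma isFrechetConormal_of_local_min {Fm : E → Set F} {x u : E} {y v : F} {c η : ℝ}
    (hc : 0 ≤ c) (hη : 0 < η) (hux : u ≠ x)
    (hmin : ∃ r : ℝ, 0 < r ∧ ∀ u' v', v' ∈ Fm u' → ‖u' - u‖ < r → ‖v' - v‖ < r →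
      ‖u - x‖ + c * √(‖v - y‖ ^ 2 + η ^ 2) ≤ ‖u' - x‖ + c * √(‖v' - y‖ ^ 2 + η ^ 2)) :
    IsFrechetConormal Fm u v (-(‖u - x‖⁻¹ • (u - x)))
      ((c * (√(‖v - y‖ ^ 2 + η ^ 2))⁻¹) • (v - y)) := by
  obtain ⟨r, hr, hmin⟩ := hmin
  have hn : 0 < ‖u - x‖ := norm_pos_iff.2 (sub_ne_zero.2 hux)
  have hs : 0 < √(‖v - y‖ ^ 2 + η ^ 2) := Real.sqrt_pos.2 (by positivity)
  set s := √(‖v - y‖ ^ 2 + η ^ 2) with hsdef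
  intro ε hε
  set C := ‖u - x‖⁻¹ + c * s⁻¹ + 1 with hC
  have hcs : 0 ≤ c * s⁻¹ := by positivity
  have hni : 0 < ‖u - x‖⁻¹ := by positivity
  have hC0 : 0 < C := by positivity
  refine ⟨min r (ε / C), by positivity, fun u' v' hv' hu hv => ?_⟩
  have hm := hmin u' v' hv' (hu.trans_le (min_le_left _ _)) (hv.trans_le (min_le_left _ _))
  have h1 := sqrt_norm_sq_add_sq_sub_le (u := u' - x) (v := u - x) (η := 0)
    (by simpa using sub_ne_zero.2 hux)
  have h2 := sqrt_norm_sq_add_sq_sub_le (u := v' - y) (v := v - y) (η := η) hs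
  simp only [ne_eq, OfNat.ofNat_ne_zero, not_false_eq_true, zero_pow, add_zero, norm_nonneg,
    Real.sqrt_sq, sub_sub_sub_cancel_right] at h1 h2
  rw [← hsdef] at h2
  replace h2 := mul_le_mul_of_nonneg_left h2 hc
  have hu2 : C * ‖u' - u‖ ≤ ε := by
    have := hu.trans_le (min_le_right _ _)
    rw [lt_div_iff₀ hC0] at this; linarith
  have hv2 : C * ‖v' - v‖ ≤ ε := by
    have := hv.trans_le (min_le_right _ _)
    rw [lt_div_iff₀ hC0] at this; linarith
  have hu3 := mul_le_mul_of_nonneg_right hu2 (norm_nonneg (u' - u))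
  have hv3 := mul_le_mul_of_nonneg_right hv2 (norm_nonneg (v' - v))
  have hu4 : ‖u - x‖⁻¹ * ‖u' - u‖ ^ 2 ≤ C * ‖u' - u‖ * ‖u' - u‖ := by
    rw [mul_assoc, ← sq]; gcongr; linarith
  have hv4 : c * s⁻¹ * ‖v' - v‖ ^ 2 ≤ C * ‖v' - v‖ * ‖v' - v‖ := by
    rw [mul_assoc C, ← sq]; gcongr; linarith
  have hup : 0 ≤ ‖u - x‖⁻¹ * ‖u' - u‖ ^ 2 := by positivity
  have hvp : 0 ≤ c * s⁻¹ * ‖v' - v‖ ^ 2 := by positivity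
  rw [inner_neg_left, real_inner_smul_left, real_inner_smul_left]
  linarith

/-- A uniform bound `‖w‖ ≤ a ‖z‖` on Fréchet conormals around a graph point implies the Aubin
property with every larger constant. -/
lemma aubinWith_of_conormal_bound [FiniteDimensional ℝ E] [FiniteDimensional ℝ F]
    {Fm : E → Set F} {x : E} {y : F} (hloc : LocClosedAt (svGraph Fm) (x, y)) {a κ : ℝ≥0}
    (ha0 : 0 < a) (haκ : a < κ) {ρ : ℝ} (hρ : 0 < ρ)
    (hbound : ∀ x' y' w z, y' ∈ Fm x' → dist x' x < ρ → dist y' y < ρ →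
      IsFrechetConormal Fm x' y' w z → ‖w‖ ≤ a * ‖z‖) : AubinWith κ Fm x y := by
  obtain ⟨r, hr, hclosed⟩ := hloc
  have ha : (0 : ℝ) < a := ha0
  have hκ : (a : ℝ) < κ := haκ
  have hκ0 : (0 : ℝ) < κ := ha.trans hκ
  set C : ℝ := 1 + 2 * κ + 2 * (κ / a) with hC
  have hκa : (0 : ℝ) < κ / a := by positivity
  have hC1 : 1 < C := by linarith
  set δ : ℝ := min r ρ / C with hδdef
  have hδ : 0 < δ := by positivity
  have hδC : δ * C = min r ρ := div_mul_cancel₀ _ (by positivity)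
  refine ⟨ball x δ, ball_mem_nhds _ hδ, ball y δ, ball_mem_nhds _ hδ, ?_⟩
  rintro x₁ hx₁ x₀ hx₀ y₀ ⟨hy₀, hy₀δ⟩
  rcases eq_or_ne x₁ x₀ with rfl | hne
  · exact ⟨y₀, hy₀, by simp⟩
  have hd : 0 < ‖x₁ - x₀‖ := norm_pos_iff.2 (sub_ne_zero.2 hne)
  set d := ‖x₁ - x₀‖ with hddef
  rw [mem_ball, dist_eq_norm] at hx₁ hx₀ hy₀δ
  have hd2 : d < 2 * δ := by
    have := norm_sub_le_norm_sub_add_norm_sub x₁ x x₀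
    rw [norm_sub_rev x x₀] at this
    linarith
  set η : ℝ := (κ - a) * d with hηdef
  have hη : 0 < η := mul_pos (sub_pos.2 hκ) hd
  have := FiniteDimensional.proper_real E
  have := FiniteDimensional.proper_real F
  have hcomp : IsCompact (svGraph Fm ∩ closedBall (x, y) r) :=
    (isCompact_closedBall (x, y) r).of_isClosed_subset hclosed inter_subset_right
  have hδr : δ ≤ r := by nlinarith [min_le_left r ρ]
  have hstart : (x₀, y₀) ∈ svGraph Fm ∩ closedBall (x, y) r := by
    refine ⟨hy₀, ?_⟩
    rw [← closedBall_prod_same]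
    exact ⟨by rw [mem_closedBall, dist_eq_norm]; linarith,
      by rw [mem_closedBall, dist_eq_norm]; linarith⟩
  obtain ⟨⟨u, v⟩, ⟨huv, -⟩, hmin⟩ := hcomp.exists_isMinOn ⟨_, hstart⟩
    (f := fun p : E × F => ‖p.1 - x₁‖ + (a : ℝ)⁻¹ * √(‖p.2 - y₀‖ ^ 2 + η ^ 2))
    (by fun_prop)
  replace huv : v ∈ Fm u := huv
  have hval := hmin hstart
  simp only [mem_ofPred_eq, sub_self, norm_zero, ne_eq, OfNat.ofNat_ne_zero, not_false_eq_true,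
    zero_pow, zero_add, Real.sqrt_sq hη.le] at hval
  rw [norm_sub_rev x₀ x₁, ← hddef] at hval
  have hs : ‖v - y₀‖ < √(‖v - y₀‖ ^ 2 + η ^ 2) :=
    Real.lt_sqrt_of_sq_lt (by nlinarith)
  set s := √(‖v - y₀‖ ^ 2 + η ^ 2) with hsdef
  have hs0 : 0 < s := (norm_nonneg _).trans_lt hs
  have hval' : a * ‖u - x₁‖ + s ≤ κ * d := by
    have := mul_le_mul_of_nonneg_left hval ha.le
    rw [mul_add, mul_add, mul_inv_cancel_left₀ ha.ne', mul_inv_cancel_left₀ ha.ne'] at this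
    linarith
  have hv : ‖v - y₀‖ ≤ κ * d := by
    have : 0 ≤ a * ‖u - x₁‖ := by positivity
    linarith
  rcases eq_or_ne u x₁ with rfl | hux
  · exact ⟨v, huv, by rwa [norm_sub_rev]⟩
  exfalso
  have hu : ‖u - x₁‖ ≤ κ / a * d := by
    rw [div_mul_eq_mul_div, le_div_iff₀ ha]; linarith
  have hux' : ‖u - x‖ < min r ρ := by
    have := norm_sub_le_norm_sub_add_norm_sub u x₁ x
    nlinarith
  have hvy : ‖v - y‖ < min r ρ := by
    have := norm_sub_le_norm_sub_add_norm_sub v y₀ y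
    nlinarith
  have hN := isFrechetConormal_of_local_min (Fm := Fm) (x := x₁) (u := u) (y := y₀) (v := v)
    (c := (a : ℝ)⁻¹) (η := η) (by positivity) hη hux (by
      refine ⟨min (r - ‖u - x‖) (r - ‖v - y‖), ?_, fun u' v' hv' h1 h2 => ?_⟩
      · exact lt_min (sub_pos.2 (hux'.trans_le (min_le_left _ _)))
          (sub_pos.2 (hvy.trans_le (min_le_left _ _)))
      · refine hmin (a := (u', v')) ⟨hv', ?_⟩
        rw [← closedBall_prod_same]
        have h3 := norm_sub_le_norm_sub_add_norm_sub u' u x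
        have h4 := norm_sub_le_norm_sub_add_norm_sub v' v y
        have h5 := h1.trans_le (min_le_left _ _)
        have h6 := h2.trans_le (min_le_right _ _)
        exact ⟨by rw [mem_closedBall, dist_eq_norm]; linarith,
          by rw [mem_closedBall, dist_eq_norm]; linarith⟩)
  have hle := hbound u v _ _ huv (by rw [dist_eq_norm]; exact hux'.trans_le (min_le_right _ _))
    (by rw [dist_eq_norm]; exact hvy.trans_le (min_le_right _ _)) hN
  have hn : ‖u - x₁‖ ≠ 0 := norm_ne_zero_iff.2 (sub_ne_zero.2 hux)
  rw [← hsdef, norm_neg, norm_smul, norm_smul, norm_inv, norm_norm, inv_mul_cancel₀ hn,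
    Real.norm_of_nonneg (by positivity), mul_assoc, mul_inv_cancel_left₀ ha.ne', inv_mul_eq_div,
    le_div_iff₀ hs0] at hle
  linarith

lemma aubinWith_of_outerNormSV_lt [FiniteDimensional ℝ E] [FiniteDimensional ℝ F]
    {Fm : E → Set F} {x : E} {y : F} (hloc : LocClosedAt (svGraph Fm) (x, y)) {κ : ℝ≥0}
    (h : outerNormSV (coDeriv Fm x y) < κ) : AubinWith κ Fm x y := by
  obtain ⟨a, ha, haκ⟩ := ENNReal.lt_iff_exists_nnreal_btwn.1 h
  obtain ⟨ρ, hρ, hbound⟩ := exists_ball_norm_le_of_outerNormSV_lt ha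
  exact aubinWith_of_conormal_bound hloc (by exact_mod_cast zero_le.trans_lt ha)
    (by exact_mod_cast haκ) hρ hbound

lemma outerNormSV_coDeriv_le_lipMod (Fm : E → Set F) (x : E) (y : F) :
    outerNormSV (coDeriv Fm x y) ≤ lipMod Fm x y :=
  le_iInf₂ fun _ hA => outerNormSV_le_of_aubinWith hA

lemma lipMod_le_outerNormSV_coDeriv [FiniteDimensional ℝ E] [FiniteDimensional ℝ F]
    {Fm : E → Set F} {x : E} {y : F} (hloc : LocClosedAt (svGraph Fm) (x, y)) :
    lipMod Fm x y ≤ outerNormSV (coDeriv Fm x y) := by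
  refine le_of_forall_gt fun b hb => ?_
  obtain ⟨κ, hκ, hκb⟩ := ENNReal.lt_iff_exists_nnreal_btwn.1 hb
  exact (iInf₂_le κ (aubinWith_of_outerNormSV_lt hloc hκ)).trans_lt hκb

end Conormals

/-- Mordukhovich criterion: point-based characterizations of the Aubin property. -/
theorem mordukhovich_criterion {n m : ℕ}
    (Fm : EuclideanSpace ℝ (Fin n) → Set (EuclideanSpace ℝ (Fin m)))
    (xbar : EuclideanSpace ℝ (Fin n)) (ybar : EuclideanSpace ℝ (Fin m))
    (hgr : ybar ∈ Fm xbar) (hloc : LocClosedAt (svGraph Fm) (xbar, ybar)) :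
    ((∃ κ : ℝ≥0, AubinWith κ Fm xbar ybar) ↔
      outerNormSV (coDeriv Fm xbar ybar) < ⊤) ∧
    (outerNormSV (coDeriv Fm xbar ybar) < ⊤ ↔
      coDeriv Fm xbar ybar 0 = {0}) ∧
    ((∃ κ : ℝ≥0, AubinWith κ Fm xbar ybar) →
      lipMod Fm xbar ybar = outerNormSV (coDeriv Fm xbar ybar)) := by
  refine ⟨⟨?_, fun h => ?_⟩, ⟨coDeriv_zero_eq_of_outerNormSV_lt_top hgr,
    outerNormSV_lt_top_of_coDeriv_zero_eq⟩, fun _ =>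
    (lipMod_le_outerNormSV_coDeriv hloc).antisymm (outerNormSV_coDeriv_le_lipMod ..)⟩
  · rintro ⟨κ, hA⟩
    exact (outerNormSV_le_of_aubinWith hA).trans_lt ENNReal.coe_lt_top
  · obtain ⟨κ, hκ, -⟩ := ENNReal.lt_iff_exists_nnreal_btwn.1 h
    exact ⟨κ, aubinWith_of_outerNormSV_lt hloc hκ⟩

end
end
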